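/- Let α ∈ [0,1] and let (b_n), (c_n) be its Shulga sequences. For any n ≥ 1 for which the (n+1)-th step of the algorithm is defined, if b_n ≥ 8 and b_{n+1} < c_n, then c_{n+1} > (3/2) · b_n. -/

import Mathlib

/-!
Write `q, q'` and `s, s'` for the last two convergent denominators of `[0; b₁, …, bₙ]` and
`[0; c₁, …, cₙ]`, and `Q = b q + q'`, `S = c s + s'` for the new ones after a step with digits
`b`, `c`. As long as `c_k ≥ b_k` for `k ≤ n`, continuants give `q ≤ s` and `q' ≤ s'`, so the
remainder `x = |α - [0; b₁, …, bₙ] - [0; c₁, …, cₙ]| < 1 / (s (s + s'))` is so small that `α` minus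
either fraction starts with the digits of the other. The definition of the new digits then places
`x` in `(1 / (q Q), 1 / (q (Q - q))]`, and `y = x - 1 / (q Q)` in
`(1 / (s (S + s)), 1 / (s S)]` (`Conv.next_digit`). Eliminating `x` and `y` yields the three
inequalities of `StepIneq`, in particular `(s + s') Q < (S + s) q` (`StepIneq.ratio`), whence
`c ≥ b` and the induction closes (`State.step`).

For the growth, put `T = S (S + s) / Q²`, `β = Q / q`, `γ = S / s`, let `b`, `c` be the `n`-th
digits and `d`, `e` the next ones. The inequalities say that `γ (1 - 1/β) < T < d + 1/β` and
that `e + 1/γ + 1` exceeds both `(1 + 1/γ) (d + 1/β)` and that quantity divided by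
`d + 1/β - T`. If `c ≥ 2 b - 1`, then `d` is at least about `c (1 - 1/b)` and the first bound for
`e` suffices. Otherwise `d ≤ c - 1` makes the gap `d + 1/β - T` smaller than `(c + 1 - b) / b`, and
the second bound suffices; this is where `b ≥ 8` is needed (`growth`).
-/

noncomputable section

namespace ShulgaPaper

open Filter Topology

/-- The value of the finite continued fraction `[0; a₁, …, aₙ]`
(the empty continued fraction has value `0`). -/
def cf : List ℕ → ℝ
  | [] => 0
  | a :: l => 1 / ((a : ℝ) + cf l)

/-- Iterates of the Gauss map, starting from the fractional part of `x`. -/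
def gaussIter (x : ℝ) : ℕ → ℝ
  | 0 => Int.fract x
  | n + 1 => Int.fract (1 / gaussIter x n)

/-- The `n`-th partial quotient `aₙ(x)` of the continued fraction expansion of `x`
(for `n ≥ 1`; a junk value is returned if it is undefined). -/
def pq (x : ℝ) (n : ℕ) : ℕ := ⌊1 / gaussIter x (n - 1)⌋₊

/-- The `n`-th partial quotient `aₙ(x)` of `x` is defined (`n ≥ 1`), i.e. `n` does not
exceed the length of the continued fraction expansion of `x`. -/
def pqDefined (x : ℝ) (n : ℕ) : Prop := gaussIter x (n - 1) ≠ 0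

/-- The set `G` of real numbers that are rational or whose partial quotients diverge. -/
def G : Set ℝ :=
  {x | (∃ q : ℚ, x = (q : ℝ)) ∨ Tendsto (fun n => pq x n) atTop atTop}

/-- The list of pairs `(b_k, c_k)`, `k = 1, …, n`, produced by (a totalized version of)
Shulga's algorithm applied to `α`. -/
def shulgaList (α : ℝ) : ℕ → List (ℕ × ℕ)
  | 0 => []
  | n + 1 =>
      let L := shulgaList α n
      let b := pq (α - cf (L.map Prod.snd)) (n + 1) + 1
      let c := pq (α - cf (L.map Prod.fst ++ [b])) (n + 1)
      L ++ [(b, c)]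

/-- The list `[b₁, …, bₙ]` of Shulga's algorithm applied to `α`. -/
def bList (α : ℝ) (n : ℕ) : List ℕ := (shulgaList α n).map Prod.fst

/-- The list `[c₁, …, cₙ]` of Shulga's algorithm applied to `α`. -/
def cList (α : ℝ) (n : ℕ) : List ℕ := (shulgaList α n).map Prod.snd

/-- `bₙ` of Shulga's algorithm applied to `α` (for `n ≥ 1`). -/
def shulgaB (α : ℝ) (n : ℕ) : ℕ := ((shulgaList α n).getLast?.getD (0, 0)).1

/-- `cₙ` of Shulga's algorithm applied to `α` (for `n ≥ 1`). -/
def shulgaC (α : ℝ) (n : ℕ) : ℕ := ((shulgaList α n).getLast?.getD (0, 0)).2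

/-- The first `n` steps of Shulga's algorithm applied to `α` are defined: for each step
`k + 1 ≤ n`, the partial quotients `a_{k+1}(α - [0;c₁,…,c_k])` and
`a_{k+1}(α - [0;b₁,…,b_{k+1}])` defining `b_{k+1}` and `c_{k+1}` exist
(in particular the algorithm has not stopped before step `n`). -/
def shulgaDefined (α : ℝ) (n : ℕ) : Prop :=
  ∀ k < n, pqDefined (α - cf (cList α k)) (k + 1) ∧
    pqDefined (α - cf (bList α (k + 1))) (k + 1)

/-- The half-open interval whose included endpoint is `x` and excluded endpoint is `y`,
the smaller one being the left endpoint. -/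
def hIco (x y : ℝ) : Set ℝ := if x ≤ y then Set.Ico x y else Set.Ioc y x

/-- The list `[a 1, …, a n]`. -/
def listOf (a : ℕ → ℕ) (n : ℕ) : List ℕ := (List.range n).map fun i => a (i + 1)

/-- The interval `B_k` determined by the digits `b`, `c` (`k ≥ 1`). -/
def Bset (b c : ℕ → ℕ) (k : ℕ) : Set ℝ :=
  hIco (cf (listOf b (k - 1) ++ [b k - 1]) + cf (listOf c (k - 1)))
    (cf (listOf b k) + cf (listOf c (k - 1)))

/-- The interval `C_k` determined by the digits `b`, `c` (`k ≥ 1`). -/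
def Cset (b c : ℕ → ℕ) (k : ℕ) : Set ℝ :=
  hIco (cf (listOf c k) + cf (listOf b k))
    (cf (listOf c (k - 1) ++ [c k + 1]) + cf (listOf b k))

/-- `A₀ = [0,1]` and `Aₙ = ⋂_{k=1}^{n} (B_k ∩ C_k)` for `n ≥ 1`. -/
def Aset (b c : ℕ → ℕ) : ℕ → Set ℝ
  | 0 => Set.Icc 0 1
  | n + 1 => ⋂ k ∈ Finset.Icc 1 (n + 1), (Bset b c k ∩ Cset b c k)

/-- The denominators of the convergents of `[0; a 1, a 2, …]`:
`q₀ = 1`, `q₁ = a 1`, `q_k = a k * q_{k-1} + q_{k-2}`. -/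
def qden (a : ℕ → ℕ) : ℕ → ℕ
  | 0 => 1
  | 1 => a 1
  | n + 2 => a (n + 2) * qden a (n + 1) + qden a n


/-! ### Continued fractions with a real tail -/

/-- The value `[0; a₁, …, aₙ + w]` of a continued fraction with digits `l = [a₁, …, aₙ]` and a
real tail `w`; for empty `l` it is `w` itself. -/
def cfTail : List ℕ → ℝ → ℝ
  | [], w => w
  | a :: l, w => 1 / ((a : ℝ) + cfTail l w)

lemma cf_eq_cfTail (l : List ℕ) : cf l = cfTail l 0 := by
  induction l with
  | nil => rfl
  | cons a l ih => simp [cf, cfTail, ih]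

lemma cfTail_append (l : List ℕ) (a : ℕ) (w : ℝ) :
    cfTail (l ++ [a]) w = cfTail l (1 / (a + w)) := by
  induction l with
  | nil => simp [cfTail]
  | cons a l ih => simp [cfTail, ih]

/-- The bound `2 ≤ a` on the digits keeps every complete quotient inside `[0, 1)`; a last digit `1`
with `w = 0` would give the value `1`, which the fractional part destroys. -/
lemma cfTail_mem (l : List ℕ) (hl : ∀ a ∈ l, 2 ≤ a) (w : ℝ) (h0 : 0 ≤ w) (h1 : w < 1) :
    0 ≤ cfTail l w ∧ cfTail l w < 1 := by
  induction l with
  | nil => exact ⟨h0, h1⟩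
  | cons a l ih =>
    obtain ⟨i0, i1⟩ := ih fun x hx => hl x (List.mem_cons_of_mem _ hx)
    have ha : (2 : ℝ) ≤ a := by exact_mod_cast hl a List.mem_cons_self
    simp only [cfTail]
    refine ⟨by positivity, ?_⟩
    rw [div_lt_one (by positivity)]
    linarith

lemma gaussIter_succ (x : ℝ) (n : ℕ) :
    gaussIter x (n + 1) = gaussIter (1 / Int.fract x) n := by
  induction n with
  | zero => rfl
  | succ n ih => rw [gaussIter, ih, gaussIter]

lemma gaussIter_natCast_add (a : ℕ) (x : ℝ) (n : ℕ) :
    gaussIter (a + x) n = gaussIter x n := by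
  induction n with
  | zero => simp [gaussIter]
  | succ n ih => rw [gaussIter, ih, gaussIter]

lemma gaussIter_cfTail (l : List ℕ) (hl : ∀ a ∈ l, 2 ≤ a) (w : ℝ) (h0 : 0 ≤ w) (h1 : w < 1) :
    gaussIter (cfTail l w) l.length = w := by
  induction l with
  | nil => simpa [gaussIter, cfTail] using Int.fract_eq_self.2 ⟨h0, h1⟩
  | cons a l ih =>
    rw [List.length_cons, gaussIter_succ, Int.fract_eq_self.2 (cfTail_mem _ hl w h0 h1)]
    simp only [cfTail, one_div_one_div]
    exact (gaussIter_natCast_add a _ _).trans (ih fun x hx => hl x (List.mem_cons_of_mem _ hx))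

/-! ### Convergents -/

/-- `p / q` and `p' / q'` are the last two convergents of the continued fraction with digits `l`
(all at least `2`), and `σ = (-1) ^ l.length`. The convergents are pinned by the Möbius form of
`cfTail l`. -/
structure Conv (l : List ℕ) (p p' q q' σ : ℝ) : Prop where
  digits : ∀ a ∈ l, 2 ≤ a
  formula : ∀ w : ℝ, 0 ≤ w → cfTail l w = (p + w * p') / (q + w * q')
  det : p' * q - p * q' = σ
  sign : σ * σ = 1
  qpos : 0 < q
  q'nonneg : 0 ≤ q'

lemma Conv.nil : Conv [] 0 1 1 0 1 where
  digits := by simp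
  formula := by simp [cfTail]
  det := by norm_num
  sign := by norm_num
  qpos := by norm_num
  q'nonneg := le_rfl

lemma Conv.snoc {l : List ℕ} {p p' q q' σ : ℝ} (h : Conv l p p' q q' σ) (a : ℕ) (ha : 2 ≤ a) :
    Conv (l ++ [a]) (a * p + p') p (a * q + q') q (-σ) := by
  have ha' : (2 : ℝ) ≤ a := by exact_mod_cast ha
  have hq := h.qpos
  have hq' := h.q'nonneg
  refine ⟨?_, ?_, ?_, ?_, by positivity, hq.le⟩
  · intro x hx
    rcases List.mem_append.1 hx with hx | hx
    · exact h.digits x hx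
    · rw [List.mem_singleton.1 hx]; exact ha
  · intro w hw
    rw [cfTail_append, h.formula _ (by positivity)]
    have : 0 < (a : ℝ) + w := by linarith
    field_simp
    ring
  · linear_combination -h.det
  · linear_combination h.sign

lemma Conv.cf_eq {l : List ℕ} {p p' q q' σ : ℝ} (h : Conv l p p' q q' σ) : cf l = p / q := by
  rw [cf_eq_cfTail, h.formula 0 le_rfl]; simp

lemma Conv.cf_snoc {l : List ℕ} {p p' q q' σ : ℝ} (h : Conv l p p' q q' σ) (a : ℕ) (ha : 2 ≤ a) :
    cf (l ++ [a]) = cf l + σ / (q * (a * q + q')) := by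
  have ha' : (2 : ℝ) ≤ a := by exact_mod_cast ha
  have hq := h.qpos
  have hq' := h.q'nonneg
  have hQ : 0 < a * q + q' := by positivity
  rw [(h.snoc a ha).cf_eq, h.cf_eq]
  field_simp
  linear_combination h.det

/-- If `z` is at signed distance `x` from `cf l`, small enough for `z` to have `l` as its first
digits, then the next digit of `z` is located by `1 / x`. -/
lemma Conv.next_digit {l : List ℕ} {p p' q q' σ z : ℝ} {n : ℕ} (h : Conv l p p' q q' σ)
    (hn : l.length = n)
    (hx0 : 0 ≤ σ * (z - cf l)) (hx1 : σ * (z - cf l) * (q * (q + q')) < 1)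
    (hd : pqDefined z (n + 1)) :
    1 ≤ pq z (n + 1) ∧ 0 < σ * (z - cf l) ∧
      σ * (z - cf l) * (q * (pq z (n + 1) * q + q')) ≤ 1 ∧
      1 < σ * (z - cf l) * (q * ((pq z (n + 1) + 1) * q + q')) := by
  have hq := h.qpos
  have hq' := h.q'nonneg
  set x := σ * (z - cf l) with hx
  have hqq : 0 ≤ x * q * q' := by positivity
  have hD : 0 < 1 - q * q' * x := by nlinarith [mul_nonneg hx0 (mul_nonneg hq.le hq.le)]
  -- The tail solving `z = (p + w * p') / (q + w * q')`.
  obtain ⟨w, hw⟩ : ∃ w, w = q ^ 2 * x / (1 - q * q' * x) := ⟨_, rfl⟩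
  have hw0 : 0 ≤ w := by rw [hw]; positivity
  have hw1 : w < 1 := by rw [hw, div_lt_one hD]; nlinarith
  have hwD : w * (1 - q * q' * x) = q ^ 2 * x := by
    rw [hw, div_mul_cancel₀ _ hD.ne']
  have hz : z = p / q + σ * x := by
    rw [hx, ← h.cf_eq]; linear_combination (cf l - z) * h.sign
  have hzw : z = cfTail l w := by
    have hpos : 0 < q + w * q' := by positivity
    rw [h.formula w hw0, hz, eq_div_iff hpos.ne']
    have e1 : (q + w * q') * (1 - q * q' * x) = q := by linear_combination q' * hwD
    have e2 : (p + w * p') * (1 - q * q' * x) = p + q * x * σ := by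
      linear_combination p' * hwD + q * x * h.det
    apply mul_right_cancel₀ hD.ne'
    rw [mul_assoc, e1, e2]
    field_simp
  have hg : gaussIter z n = w := by
    rw [hzw, ← hn]; exact gaussIter_cfTail l h.digits w hw0 hw1
  have hpq : pq z (n + 1) = ⌊1 / w⌋₊ := by
    simp only [pq, Nat.add_sub_cancel]; rw [hg]
  have hwpos : 0 < w := lt_of_le_of_ne hw0 fun e => hd (by simpa using hg.trans e.symm)
  have hxpos : 0 < x := by
    refine lt_of_le_of_ne hx0 fun e => hwpos.ne' ?_
    rw [hw, ← e]; simp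
  have f1 : (pq z (n + 1) : ℝ) * w ≤ 1 := by
    rw [hpq, ← le_div_iff₀ hwpos]; exact Nat.floor_le (by positivity)
  have f2 : 1 < ((pq z (n + 1) : ℝ) + 1) * w := by
    rw [hpq, ← div_lt_iff₀ hwpos]; exact Nat.lt_floor_add_one _
  have f3 : 1 ≤ pq z (n + 1) := by
    rw [hpq]; apply Nat.le_floor
    rw [Nat.cast_one, le_div_iff₀ hwpos]; linarith
  refine ⟨f3, hxpos, ?_, ?_⟩
  · have e := mul_le_mul_of_nonneg_right f1 hD.le
    rw [mul_assoc (pq z (n + 1) : ℝ) w, hwD] at e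
    linarith
  · have e := mul_lt_mul_of_pos_right f2 hD
    rw [mul_assoc ((pq z (n + 1) : ℝ) + 1) w, hwD] at e
    linarith

/-! ### The two convergents along the algorithm -/

lemma shulgaList_succ (α : ℝ) (n : ℕ) :
    shulgaList α (n + 1) = shulgaList α n ++ [(shulgaB α (n + 1), shulgaC α (n + 1))] := by
  simp [shulgaB, shulgaC, shulgaList]

lemma bList_succ (α : ℝ) (n : ℕ) : bList α (n + 1) = bList α n ++ [shulgaB α (n + 1)] := by
  simp [bList, shulgaList_succ]

lemma cList_succ (α : ℝ) (n : ℕ) : cList α (n + 1) = cList α n ++ [shulgaC α (n + 1)] := by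
  simp [cList, shulgaList_succ]

lemma shulgaB_succ (α : ℝ) (n : ℕ) :
    shulgaB α (n + 1) = pq (α - cf (cList α n)) (n + 1) + 1 := by
  simp [shulgaB, cList, shulgaList]

lemma shulgaC_succ (α : ℝ) (n : ℕ) :
    shulgaC α (n + 1) = pq (α - cf (bList α (n + 1))) (n + 1) := by
  rw [bList_succ, shulgaB_succ]
  simp [shulgaC, cList, bList, shulgaList]

lemma length_shulgaList (α : ℝ) (n : ℕ) : (shulgaList α n).length = n := by
  induction n with
  | zero => rfl
  | succ n ih => simp [shulgaList_succ, ih]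

/-- The invariant after `n` steps. The denominators `q, q'` (last and last but one) belong to
`[0; b₁, …, bₙ]` and `s, s'` to `[0; c₁, …, cₙ]`. The denominators of the `c`-side dominate those of
the `b`-side, and the remainder `α - [0; b₁, …, bₙ] - [0; c₁, …, cₙ]` has sign `(-1) ^ n` and is
small enough for `α` minus either fraction to begin with the digits of the other. -/
def State (α : ℝ) (n : ℕ) (q q' s s' : ℝ) : Prop :=
  ∃ p p' r r' σ, Conv (bList α n) p p' q q' σ ∧ Conv (cList α n) r r' s s' σ ∧
    q ≤ s ∧ q' ≤ s' ∧ 0 ≤ σ * (α - cf (bList α n) - cf (cList α n)) ∧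
    σ * (α - cf (bList α n) - cf (cList α n)) * (s * (s + s')) < 1

lemma State.zero (α : ℝ) (h0 : 0 ≤ α) (h1 : α < 1) : State α 0 1 0 1 0 := by
  refine ⟨0, 1, 0, 1, 1, Conv.nil, Conv.nil, le_rfl, le_rfl, ?_, ?_⟩ <;>
    simp [bList, cList, shulgaList, cf, h0, h1]

/-- The inequalities produced by one step of the algorithm with digits `b`, `c`, in terms of the
denominators before the step. -/
structure StepIneq (q q' s s' b c : ℝ) : Prop where
  b_large : s * (s + s') < q * (b * q + q')
  c_large : (b * q + q') * (b * q + q' - q) < s * (c * s + s' + s)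
  c_large_of_close : s * (s + s') * (q * (b * q + q')) <
    s * (c * s + s' + s) * (q * (b * q + q') - s * (s + s'))

lemma StepIneq.ratio {q q' s s' b c : ℝ} (h : StepIneq q q' s s' b c) (hq : 0 < q) (hs : 0 < s)
    (hq' : 0 ≤ q') (hb : 0 ≤ b) (hc : 0 ≤ c) (hs' : 0 ≤ s') :
    (s + s') * (b * q + q') < (c * s + s' + s) * q := by
  obtain ⟨h1, h2, h3⟩ := h
  generalize hQ : b * q + q' = Q at *
  have hQ0 : 0 ≤ Q := by rw [← hQ]; positivity
  have hS : 0 < c * s + s' + s := by positivity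
  generalize c * s + s' + s = S at *
  -- One of the two lower bounds for `S` is good enough in either range of `q * Q - s * (s + s')`.
  rcases le_total (s * (s + s')) (q * (Q - q)) with h | h
  · have e1 := mul_le_mul_of_nonneg_left h hQ0
    have e2 := mul_lt_mul_of_pos_left h2 hq
    refine lt_of_mul_lt_mul_left (a := s) ?_ hs.le
    linarith
  · have e1 : q * Q - s * (s + s') ≤ q * q := by linarith
    have e2 := mul_le_mul_of_nonneg_left e1 (mul_pos hs hS).le
    refine lt_of_mul_lt_mul_left (a := s * q) ?_ (mul_pos hs hq).le
    linarith

lemma StepIneq.le {q q' s s' : ℝ} {b c : ℕ} (h : StepIneq q q' s s' b c) (hq : 0 < q) (hs : 0 < s)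
    (hq' : 0 ≤ q') (hs' : 0 ≤ s') (hb : 1 ≤ b) : b ≤ c := by
  have h1 := h.ratio hq hs hq' (by positivity) (by positivity) hs'
  have hb' : (1 : ℝ) ≤ b := by exact_mod_cast hb
  have h2 : (b : ℝ) * (s * q) < (c + 1) * (s * q) := by
    nlinarith [mul_nonneg hs.le hq', mul_nonneg hs' hq',
      mul_nonneg (mul_nonneg hs' hq.le) (sub_nonneg.2 hb')]
  have h3 := lt_of_mul_lt_mul_right h2 (mul_pos hs hq).le
  exact Nat.lt_succ_iff.1 (by exact_mod_cast h3)

lemma State.step {α : ℝ} {n : ℕ} {q q' s s' : ℝ} (h : State α n q q' s s')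
    (hd1 : pqDefined (α - cf (cList α n)) (n + 1))
    (hd2 : pqDefined (α - cf (bList α (n + 1))) (n + 1)) :
    2 ≤ shulgaB α (n + 1) ∧ shulgaB α (n + 1) ≤ shulgaC α (n + 1) ∧
    StepIneq q q' s s' (shulgaB α (n + 1)) (shulgaC α (n + 1)) ∧
    State α (n + 1) (shulgaB α (n + 1) * q + q') q (shulgaC α (n + 1) * s + s') s := by
  obtain ⟨p, p', r, r', σ, hB, hC, hqs, hqs', hx0, hx1⟩ := h
  have hq := hB.qpos
  have hs := hC.qpos
  have hq' := hB.q'nonneg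
  have hs' := hC.q'nonneg
  have lB : (bList α n).length = n := by simp [bList, length_shulgaList]
  have lC : (cList α n).length = n := by simp [cList, length_shulgaList]
  have ex : σ * (α - cf (cList α n) - cf (bList α n)) =
    σ * (α - cf (bList α n) - cf (cList α n)) := by ring
  have key1 := hB.next_digit (z := α - cf (cList α n)) lB (by rwa [ex]) (by
    rw [ex]; refine lt_of_le_of_lt (mul_le_mul_of_nonneg_left ?_ hx0) hx1; gcongr) hd1
  rw [ex] at key1
  have eb : (shulgaB α (n + 1) : ℝ) = pq (α - cf (cList α n)) (n + 1) + 1 := by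
    rw [shulgaB_succ]; push_cast; rfl
  obtain ⟨g1, g2, g3, g4⟩ := key1
  have hb2 : 2 ≤ shulgaB α (n + 1) := by rw [shulgaB_succ]; omega
  rw [← eb] at g4
  rw [eq_sub_iff_add_eq.2 eb.symm] at g3
  have hB2 := hB.snoc _ hb2
  have hcfB := hB.cf_snoc _ hb2
  rw [← bList_succ] at hB2 hcfB
  clear eb g1
  generalize hb : shulgaB α (n + 1) = b at *
  have hQ := hB2.qpos
  generalize hQe : (b : ℝ) * q + q' = Q at *
  have hbq : ((b : ℝ) - 1) * q + q' = Q - q := by rw [← hQe]; ring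
  rw [hbq] at g3
  have ey : σ * (α - cf (bList α (n + 1)) - cf (cList α n)) =
      σ * (α - cf (bList α n) - cf (cList α n)) - 1 / (q * Q) := by
    rw [hcfB]; linear_combination (-1 / (q * Q)) * hB.sign
  generalize hX : σ * (α - cf (bList α n) - cf (cList α n)) = x at *
  have hqQ : 0 < q * Q := mul_pos hq hQ
  have hy0 : 0 < x - 1 / (q * Q) := by
    rw [sub_pos, div_lt_iff₀ hqQ]; exact g4
  have hinv : 0 < 1 / (q * Q) := by positivity
  have hinv' : 1 / (q * Q) * (q * Q) = 1 := by field_simp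
  obtain ⟨k1, k2, k3, k4⟩ := hC.next_digit (z := α - cf (bList α (n + 1))) lC
    (by rw [ey]; exact hy0.le) (by
      rw [ey]; refine lt_trans (mul_lt_mul_of_pos_right ?_ (by positivity)) hx1; linarith) hd2
  rw [← shulgaC_succ] at k1 k3 k4
  generalize hc : shulgaC α (n + 1) = c at *
  rw [ey] at k2 k3 k4
  generalize hY : x - 1 / (q * Q) = y at *
  have hSpos : 0 < (c : ℝ) * s + s' := by
    have : (1 : ℝ) ≤ c := by exact_mod_cast k1
    positivity
  have hT : 0 < s * (s + s') := by positivity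
  have eS : s * (((c : ℝ) + 1) * s + s') = s * (c * s + s' + s) := by ring
  rw [eS] at k4
  have hSS : 0 < s * (c * s + s' + s) := by positivity
  have b1 : s * (s + s') < q * Q := by
    refine lt_of_mul_lt_mul_left (a := x) ?_ hx0
    linarith
  have b2 : Q * (Q - q) < s * (c * s + s' + s) := by
    refine lt_of_mul_lt_mul_left (a := y) ?_ k2.le
    refine lt_of_le_of_lt ?_ k4
    -- `y ≤ 1 / (q * (Q - q)) - 1 / (q * Q) = 1 / (Q * (Q - q))`.
    have e : y * (q * Q) = x * (q * Q) - 1 := by rw [← hY, sub_mul, hinv']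
    have e' : y * (Q * (Q - q)) * q = (x * (q * (Q - q)) - 1) * Q + q := by
      linear_combination (Q - q) * e
    have e'' : (x * (q * (Q - q)) - 1) * Q ≤ 0 :=
      mul_nonpos_of_nonpos_of_nonneg (by linarith) hQ.le
    refine le_of_mul_le_mul_right ?_ hq
    linarith
  have b3 : s * (s + s') * (q * Q) < s * (c * s + s' + s) * (q * Q - s * (s + s')) := by
    have e : y * (q * Q) = x * (q * Q) - 1 := by rw [← hY, sub_mul, hinv']
    have e1 : y * (s * (s + s') * (q * Q)) < q * Q - s * (s + s') := by
      have := mul_lt_mul_of_pos_right hx1 hqQ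
      have e2 : y * (s * (s + s') * (q * Q)) =
        x * (s * (s + s')) * (q * Q) - s * (s + s') := by linear_combination s * (s + s') * e
      linarith
    have e3 := mul_lt_mul_of_pos_right k4 (sub_pos.2 b1)
    refine lt_of_mul_lt_mul_left (a := y) ?_ k2.le
    linarith
  have hI : StepIneq q q' s s' b c := ⟨by rwa [hQe], by rwa [hQe], by rwa [hQe]⟩
  have hbc : b ≤ c := hI.le hq hs hq' hs' (by omega)
  have hc2 : 2 ≤ c := hb2.trans hbc
  have hC2 := hC.snoc c hc2
  have hcfC := hC.cf_snoc c hc2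
  rw [← hc, ← cList_succ, hc] at hC2 hcfC
  refine ⟨hb2, hbc, hI, _, _, _, _, _, hB2, hC2, ?_, hqs, ?_⟩
  · rw [← hQe]
    have : (b : ℝ) ≤ c := by exact_mod_cast hbc
    gcongr
  · have hsS : 0 < s * (c * s + s') := by positivity
    have ez : -σ * (α - cf (bList α (n + 1)) - cf (cList α (n + 1))) =
        1 / (s * (c * s + s')) - y := by
      rw [hcfC, ← ey]; linear_combination (1 / (s * (c * s + s'))) * hB.sign
    rw [ez]
    generalize hSe : (c : ℝ) * s + s' = S at *
    have i1 : 1 / (s * S) * (S * (S + s)) * s = S + s := by field_simp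
    constructor
    · rw [sub_nonneg, le_div_iff₀ hsS]; exact k3
    · refine lt_of_mul_lt_mul_right (a := s) ?_ hs.le
      have := mul_lt_mul_of_pos_right k4 hSpos
      rw [sub_mul, sub_mul, i1]
      linarith

lemma exists_state (α : ℝ) (hα : α ∈ Set.Icc (0 : ℝ) 1) (n : ℕ) (hdef : shulgaDefined α (n + 1)) :
    ∃ q q' s s', State α n q q' s s' := by
  induction n with
  | zero =>
    refine ⟨1, 0, 1, 0, State.zero α hα.1 (lt_of_le_of_ne hα.2 ?_)⟩
    -- For `α = 1` the very first partial quotient is undefined.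
    rintro rfl
    exact (hdef 0 one_pos).1 (by simp [cList, shulgaList, cf, gaussIter])
  | succ n ih =>
    obtain ⟨q, q', s, s', h⟩ := ih fun k hk => hdef k (by omega)
    obtain ⟨h1, h2⟩ := hdef n (by omega)
    exact ⟨_, _, _, _, (h.step h1 h2).2.2.2⟩

/-! ### The growth estimate -/

/-- The estimate in normalized form: `β = Q / q`, `u = 1 / β`, `v = s' / s`, `g = 1 / γ` where
`γ = c + v`, and `T = S * (S + s) / Q ^ 2`; `d` is the next digit `b`, `e` the next digit `c`. -/
lemma growth {b c d e u v g T : ℝ} (hb : 8 ≤ b) (hbc : b ≤ c) (hdc : d ≤ c - 1)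
    (hu0 : 0 ≤ u) (hu : u * b ≤ 1) (hv : 0 ≤ v) (hg0 : 0 ≤ g) (hg : g * b ≤ 1)
    (hT : (c + v) * (1 - u) < T) (hTd : T < d + u)
    (h1 : (1 + g) * (d + u) < e + g + 1)
    (h2 : (1 + g) * (d + u) < (e + g + 1) * (d + u - T)) : 3 / 2 * b < e := by
  have hu1 : u ≤ 1 / 8 := by nlinarith
  have hg1 : g ≤ 1 / 8 := by nlinarith
  have hTc : c * (1 - u) < T := lt_of_le_of_lt (by nlinarith) hT
  have hgd : 0 ≤ g * (d + u) := mul_nonneg hg0 (by nlinarith)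
  have hcu : c * u * b ≤ c := by nlinarith
  rcases le_total (2 * b - 1) c with h | h
  · nlinarith [mul_nonneg hg0 (show 0 ≤ d + u - 1 by nlinarith)]
  · have hδ : (d + u - T) * b < c + 1 - b := by
      have : d + u - T < c * u + u - 1 := by linarith
      nlinarith
    have hpos : 0 < d + u - T := by linarith
    have hE : 0 < e + g + 1 := by nlinarith
    have h3 : c * (b - 1) < (d + u) * b := by nlinarith
    have h4 : c * (b - 1) < (e + g + 1) * (c + 1 - b) := by nlinarith
    -- `c / (c + 1 - b)` decreases in `c`, so `c ≤ 2 * b - 1` is the worst case.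
    have h5 : (2 * b - 1) * (c + 1 - b) ≤ c * b := by nlinarith
    have h6 : (2 * b - 1) * (b - 1) < (e + g + 1) * b := by
      have hk : 0 < c + 1 - b := by linarith
      refine lt_of_mul_lt_mul_right (a := c + 1 - b) ?_ hk.le
      nlinarith
    nlinarith

/-- Two consecutive steps force the growth of the last digit. -/
lemma StepIneq.growth {q q' s s' b c d e : ℝ} (hq : 0 < q) (hq' : 0 ≤ q') (hs : 0 < s)
    (hs' : 0 ≤ s') (hb : 8 ≤ b) (hbc : b ≤ c) (hd0 : 0 ≤ d) (he0 : 0 ≤ e) (hdc : d ≤ c - 1)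
    (h : StepIneq q q' s s' b c)
    (k : StepIneq (b * q + q') q (c * s + s') s d e) : 3 / 2 * b < e := by
  have hQ : 0 < b * q + q' := by positivity
  have hc0 : 0 ≤ c := by linarith
  have hc1 : 0 < c := by linarith
  have hS : 0 < c * s + s' := by positivity
  have k4 := k.ratio hQ hS hq.le hd0 he0 hs.le
  obtain ⟨-, h2, -⟩ := h
  obtain ⟨k1, -, k3⟩ := k
  generalize hQe : b * q + q' = Q at *
  generalize hSe : c * s + s' = S at *
  have hd : d + q / Q = (d * Q + q) / Q := by field_simp
  have he : e + s / S + 1 = (e * S + s + S) / S := by field_simp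
  have hg : 1 + s / S = (S + s) / S := by field_simp
  have hdT : d + q / Q - S * (S + s) / Q ^ 2 = (Q * (d * Q + q) - S * (S + s)) / Q ^ 2 := by
    field_simp
  refine ShulgaPaper.growth (u := q / Q) (v := s' / s) (g := s / S) (T := S * (S + s) / Q ^ 2)
    hb hbc hdc (by positivity) ?_ (by positivity) (by positivity) ?_ ?_ ?_ ?_ ?_
  · rw [div_mul_eq_mul_div, div_le_one hQ]; linarith
  · rw [div_mul_eq_mul_div, div_le_one hS]; nlinarith
  · have e1 : (c + s' / s) * (1 - q / Q) = S * (Q * (Q - q)) / (s * Q ^ 2) := by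
      rw [← hSe]; field_simp
    have e2 : S * (S + s) / Q ^ 2 = S * (s * (S + s)) / (s * Q ^ 2) := by field_simp
    rw [e1, e2]
    gcongr
  · rw [hd, div_lt_div_iff₀ (by positivity) hQ]
    nlinarith
  · rw [hd, he, hg, div_mul_div_comm, div_lt_div_iff₀ (by positivity) hS]
    nlinarith
  · rw [hdT, hd, he, hg, div_mul_div_comm, div_mul_div_comm,
      div_lt_div_iff₀ (by positivity) (by positivity)]
    have := mul_lt_mul_of_pos_right k3 hQ
    nlinarith

/-- for `n ≥ 1`, if `bₙ ≥ 8` and `b_{n+1} < cₙ` then `c_{n+1} > (3/2)bₙ`. -/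
theorem stmt19 (α : ℝ) (hα : α ∈ Set.Icc (0 : ℝ) 1) (n : ℕ) (hn : 1 ≤ n)
    (hdef : shulgaDefined α (n + 1)) (h8 : 8 ≤ shulgaB α n)
    (hlt : shulgaB α (n + 1) < shulgaC α n) :
    (shulgaC α (n + 1) : ℝ) > 3 / 2 * (shulgaB α n : ℝ) := by
  obtain ⟨m, rfl⟩ : ∃ m, n = m + 1 := ⟨n - 1, by omega⟩
  obtain ⟨q, q', s, s', h⟩ := exists_state α hα m fun k hk => hdef k (by omega)
  obtain ⟨d1, d2⟩ := hdef m (by omega)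
  obtain ⟨d3, d4⟩ := hdef (m + 1) (by omega)
  obtain ⟨-, hbc, hI, h'⟩ := h.step d1 d2
  obtain ⟨-, -, hI', -⟩ := h'.step d3 d4
  obtain ⟨p, p', r, r', σ, hB, hC, -⟩ := h
  have hdc : (shulgaB α (m + 1 + 1) : ℝ) + 1 ≤ shulgaC α (m + 1) := by exact_mod_cast hlt
  exact StepIneq.growth hB.qpos hB.q'nonneg hC.qpos hC.q'nonneg (by exact_mod_cast h8)
    (by exact_mod_cast hbc) (Nat.cast_nonneg _) (Nat.cast_nonneg _) (by linarith) hI hI'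

end ShulgaPaper
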